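/- Let q ∈ Φ with level vector n(q), let k be a coordinate, and suppose p* = q ± 2^{−n_k(q)} e_k belongs to [−1,1]^d (i.e., p* is a forward point of q). Then p* ∈ Φ, its level vector satisfies n_k(p*) = n_k(q) + 1 and n_j(p*) = n_j(q) for all j ≠ k, and the hierarchical hat function of p* vanishes at q: φ_{p*}(q) = 0. -/

import Mathlib

/-- The one-dimensional sparse grid level sets: `Γ(n) = ∅` for `n < 0`, `Γ(0) = {0}`,
and `Γ(n) = {2^{1-n} j : j ∈ ℤ, |j| ≤ 2^{n-1}}` for `n ≥ 1`. -/
def sgLevel (n : ℤ) : Set ℝ :=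
  if n < 0 then ∅
  else if n = 0 then {0}
  else {x | ∃ j : ℤ, |j| ≤ 2 ^ (n - 1).toNat ∧ x = (2 : ℝ) ^ (1 - n) * (j : ℝ)}

/-- The tensor grid `Γ(𝐧) = Γ(n₁) × ⋯ × Γ(n_d)`. -/
def tensorGrid (d : ℕ) (nv : Fin d → ℤ) : Set (Fin d → ℝ) :=
  {x | ∀ k, x k ∈ sgLevel (nv k)}

/-- `Φ = ⋃_{𝐧 ∈ ℤ^d} Γ(𝐧)`. -/
def sgPoints (d : ℕ) : Set (Fin d → ℝ) :=
  ⋃ nv : Fin d → ℤ, tensorGrid d nv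

/-- The level of a coordinate: `lvl(t) = min {n ≥ 0 : t ∈ Γ(n)}`. -/
noncomputable def lvl (t : ℝ) : ℕ :=
  sInf {n : ℕ | t ∈ sgLevel (n : ℤ)}

/-- One-dimensional hat functions: `φ̂_{p,0} ≡ 1`, and for `n ≥ 1`,
`φ̂_{p,n}(x) = max(0, 1 - 2^{n-1}|x - p|)`. -/
def hat1 (p : ℝ) (n : ℕ) (x : ℝ) : ℝ :=
  if n = 0 then 1 else max 0 (1 - 2 ^ (n - 1) * |x - p|)

/-- The hierarchical hat function of `p ∈ Φ`: `φ_p(x) = Π_k φ̂_{p_k, n_k(p)}(x_k)`. -/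
noncomputable def hierHat (d : ℕ) (p x : Fin d → ℝ) : ℝ :=
  ∏ k, hat1 (p k) (lvl (p k)) (x k)

theorem mem_sgLevel_succ (n : ℕ) (t : ℝ) :
    t ∈ sgLevel ((n + 1 : ℕ) : ℤ) ↔ |t| ≤ 1 ∧ ∃ j : ℤ, t * 2 ^ n = j := by
  have hn : ¬ (((n + 1 : ℕ) : ℤ) < 0) := by omega
  have hn' : ((n + 1 : ℕ) : ℤ) ≠ 0 := by omega
  have hexp : (2 : ℝ) ^ (1 - ((n + 1 : ℕ) : ℤ)) = (2 ^ n)⁻¹ := by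
    rw [show (1 - ((n + 1 : ℕ) : ℤ)) = -(n : ℤ) by push_cast; ring, zpow_neg, zpow_natCast]
  have hnat : (((n + 1 : ℕ) : ℤ) - 1).toNat = n := by omega
  have hpos : (0 : ℝ) < 2 ^ n := by positivity
  have key : ∀ j : ℤ, t * 2 ^ n = j → (|t| ≤ 1 ↔ |j| ≤ 2 ^ n) := by
    intro j hj
    have habs : |t| * 2 ^ n = ((|j| : ℤ) : ℝ) := by
      rw [Int.cast_abs, ← hj, abs_mul, abs_of_pos hpos]
    rw [← Int.cast_le (R := ℝ), ← habs, ← mul_le_mul_iff_left₀ hpos]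
    simp
  have heq : ∀ j : ℤ, t = (2 ^ n)⁻¹ * (j : ℝ) ↔ t * 2 ^ n = j := by
    intro j
    rw [eq_inv_mul_iff_mul_eq₀ hpos.ne', mul_comm]
  rw [sgLevel, if_neg hn, if_neg hn', hexp, hnat]
  simp only [Set.mem_ofPred_eq, heq]
  constructor
  · rintro ⟨j, hj, ht⟩
    exact ⟨(key j ht).2 hj, j, ht⟩
  · rintro ⟨ht, j, hj⟩
    exact ⟨j, (key j hj).1 ht, hj⟩

theorem exists_mul_two_pow_eq_of_mem_sgLevel {m n : ℕ} (hmn : m ≤ n) {t : ℝ}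
    (ht : t ∈ sgLevel (m : ℤ)) : ∃ j : ℤ, t * 2 ^ n = 2 * j := by
  rcases m with _ | m
  · have h0 : t = 0 := by simpa [sgLevel] using ht
    exact ⟨0, by simp [h0]⟩
  · obtain ⟨-, j, hj⟩ := (mem_sgLevel_succ m t).1 ht
    obtain ⟨c, rfl⟩ := Nat.exists_eq_add_of_le hmn
    refine ⟨j * 2 ^ c, ?_⟩
    push_cast
    rw [← hj]
    ring

theorem mem_sgPoints_iff {d : ℕ} {x : Fin d → ℝ} :
    x ∈ sgPoints d ↔ ∀ k, ∃ n : ℕ, x k ∈ sgLevel (n : ℤ) := by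
  simp only [sgPoints, tensorGrid, Set.mem_iUnion, Set.mem_ofPred_eq]
  constructor
  · rintro ⟨nv, h⟩ k
    have hk : 0 ≤ nv k := by
      by_contra! hneg
      simpa [sgLevel, hneg] using h k
    exact ⟨(nv k).toNat, by rw [Int.toNat_of_nonneg hk]; exact h k⟩
  · intro h
    choose nv hnv using h
    exact ⟨fun k => nv k, hnv⟩

theorem mem_sgLevel_lvl {t : ℝ} (h : ∃ n : ℕ, t ∈ sgLevel (n : ℤ)) :
    t ∈ sgLevel (lvl t : ℤ) :=
  Nat.sInf_mem (s := {n : ℕ | t ∈ sgLevel (n : ℤ)}) h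

/-- Shifting a point of `Γ(n)` by `±2^{-n}` gives an odd multiple of
`2^{-n}`, which lies in no level up to `n`. -/
theorem forward_mem_sgLevel_and_lvl {n : ℕ} {t ε : ℝ} (ht : t ∈ sgLevel (n : ℤ))
    (hε : ε = 1 ∨ ε = -1) (hs : |t + ε * (2 : ℝ) ^ (-(n : ℤ))| ≤ 1) :
    t + ε * (2 : ℝ) ^ (-(n : ℤ)) ∈ sgLevel ((n + 1 : ℕ) : ℤ) ∧
      lvl (t + ε * (2 : ℝ) ^ (-(n : ℤ))) = n + 1 := by
  set s := t + ε * (2 : ℝ) ^ (-(n : ℤ)) with hsdef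
  obtain ⟨j, hj⟩ := exists_mul_two_pow_eq_of_mem_sgLevel le_rfl ht
  obtain ⟨e, he, hεe⟩ : ∃ e : ℤ, Odd e ∧ ε = e := by
    rcases hε with rfl | rfl
    · exact ⟨1, odd_one, by simp⟩
    · exact ⟨-1, odd_one.neg, by simp⟩
  have hsn : s * 2 ^ n = ((2 * j + e : ℤ) : ℝ) := by
    rw [hsdef, add_mul, hj, zpow_neg, zpow_natCast, mul_assoc,
      inv_mul_cancel₀ (by positivity), hεe]
    push_cast
    ring
  have hmem : s ∈ sgLevel ((n + 1 : ℕ) : ℤ) := (mem_sgLevel_succ n s).2 ⟨hs, _, hsn⟩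
  refine ⟨hmem, le_antisymm (Nat.sInf_le hmem) ?_⟩
  by_contra! hlt
  obtain ⟨i, hi⟩ := exists_mul_two_pow_eq_of_mem_sgLevel (Nat.lt_succ_iff.1 hlt)
    (mem_sgLevel_lvl ⟨_, hmem⟩)
  have hpar : 2 * j + e = 2 * i := by
    rw [hsn] at hi
    exact_mod_cast hi
  obtain ⟨c, rfl⟩ := he
  omega

theorem hat1_succ_forward (n : ℕ) (t : ℝ) {ε : ℝ} (hε : ε = 1 ∨ ε = -1) :
    hat1 (t + ε * (2 : ℝ) ^ (-(n : ℤ))) (n + 1) t = 0 := by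
  have habs : |ε| = 1 := by rcases hε with rfl | rfl <;> simp
  have hpos : (0 : ℝ) < 2 ^ n := by positivity
  simp [hat1, abs_mul, habs, hpos.ne']

/-- Let `q ∈ Φ`, let `k` be a coordinate, and suppose the forward point
`p* = q ± 2^{-n_k(q)} e_k` belongs to `[-1,1]^d`. Then `p* ∈ Φ`, its level vector
satisfies `n_k(p*) = n_k(q) + 1` and `n_j(p*) = n_j(q)` for `j ≠ k`, and the
hierarchical hat function of `p*` vanishes at `q`: `φ_{p*}(q) = 0`. -/
theorem forward_point_properties (d : ℕ) (q : Fin d → ℝ) (hq : q ∈ sgPoints d)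
    (k : Fin d) (ε : ℝ) (hε : ε = 1 ∨ ε = -1) (p : Fin d → ℝ)
    (hp : p = Function.update q k (q k + ε * (2 : ℝ) ^ (-(lvl (q k) : ℤ))))
    (hmem : ∀ j, p j ∈ Set.Icc (-1 : ℝ) 1) :
    p ∈ sgPoints d ∧
      lvl (p k) = lvl (q k) + 1 ∧
      (∀ j, j ≠ k → lvl (p j) = lvl (q j)) ∧
      hierHat d p q = 0 := by
  have hlv := mem_sgPoints_iff.1 hq
  have hpk : p k = q k + ε * (2 : ℝ) ^ (-(lvl (q k) : ℤ)) := by simp [hp]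
  have hpj : ∀ j, j ≠ k → p j = q j := fun j hj => by simp [hp, hj]
  obtain ⟨hmemk, hlvlk⟩ := forward_mem_sgLevel_and_lvl (mem_sgLevel_lvl (hlv k)) hε
    (hpk ▸ abs_le.2 (hmem k))
  rw [← hpk] at hmemk hlvlk
  refine ⟨mem_sgPoints_iff.2 fun j => ?_, hlvlk, fun j hj => by rw [hpj j hj], ?_⟩
  · by_cases hj : j = k
    · subst hj
      exact ⟨_, hmemk⟩
    · rw [hpj j hj]
      exact hlv j
  · refine Finset.prod_eq_zero (Finset.mem_univ k) ?_
    rw [hlvlk, hpk]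
    exact hat1_succ_forward _ _ hε
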